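/- (Theorem 1.) For any community partition 𝒞 of V, the fairness-modularity satisfies Q^P ≥ 0, and Q^P = 0 holds if and only if 𝒞 is fair, i.e. |C_u ∩ P_w| / |C_u| = |P_w| / n for every u = 1,…,k and every w = 1,…,r. -/

import Mathlib

open Finset

/-!
Let `a u` be the vector of intersection sizes `#(C u ∩ P w)` and `p` the vector of group sizes
`#(P w)`. Since `2 m^P = ‖p‖²`, the fairness-modularity is
`∑ u, (‖a u‖² ‖p‖² - ⟪a u, p⟫²) / ‖p‖⁴`, a sum of Cauchy–Schwarz defects. It is therefore
nonnegative, and it vanishes exactly when every `a u` is a multiple of `p`. The entries of `a u` and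
of `p` sum to `#(C u)` and `n`, so proportionality means equality of the normalised vectors, which
is fairness.
-/

theorem sum_mul_sq_eq_sq_mul_sq_iff {κ : Type*} [Fintype κ] {f g : κ → ℝ} (hg : g ≠ 0) :
    (∑ i, f i * g i) ^ 2 = (∑ i, f i ^ 2) * ∑ i, g i ^ 2 ↔ ∃ c : ℝ, f = c • g := by
  have h := (norm_inner_eq_norm_tfae ℝ (WithLp.toLp 2 g) (WithLp.toLp 2 f)).out 0 2
  rw [WithLp.toLp_eq_zero, or_iff_right hg] at h
  rw [← sq_eq_sq₀ (norm_nonneg _) (by positivity), mul_pow, EuclideanSpace.norm_sq_eq,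
    EuclideanSpace.norm_sq_eq] at h
  simpa [PiLp.inner_apply, mul_comm, ← WithLp.toLp_smul] using h

theorem exists_eq_smul_iff_div_sum_eq_div_sum {κ K : Type*} [Fintype κ] [Field K] {f g : κ → K}
    (hf : ∑ i, f i ≠ 0) :
    (∃ c : K, f = c • g) ↔ ∀ i, f i / ∑ j, f j = g i / ∑ j, g j := by
  constructor
  · rintro ⟨c, rfl⟩ i
    simp only [Pi.smul_apply, smul_eq_mul, ← mul_sum] at hf ⊢
    exact mul_div_mul_left _ _ (left_ne_zero_of_mul hf)
  · intro h
    refine ⟨(∑ j, f j) / ∑ j, g j, funext fun i ↦ ?_⟩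
    rw [Pi.smul_apply, smul_eq_mul, div_mul_eq_mul_div, mul_div_assoc, ← h i, mul_div_cancel₀ _ hf]

theorem sum_card_inter_of_subset_biUnion {α κ : Type*} [DecidableEq α] {s : Finset κ}
    {P : κ → Finset α} (hP : (s : Set κ).PairwiseDisjoint P) {A : Finset α}
    (hA : A ⊆ s.biUnion P) : ∑ w ∈ s, #(A ∩ P w) = #A := by
  rw [← card_biUnion (hP.mono fun _ ↦ inter_subset_right), ← inter_biUnion, inter_eq_left.mpr hA]

section FairnessModularity

variable {V ι κ : Type*} [DecidableEq V]

/-- Fairness of the communities `C u`: each protected group `P w` has the same share in every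
community as in the whole vertex set. -/
def IsFair [Fintype V] (C : ι → Finset V) (P : κ → Finset V) : Prop :=
  ∀ u w, (#(C u ∩ P w) : ℝ) / #(C u) = (#(P w) : ℝ) / Fintype.card V

theorem isFair_iff_forall_exists_eq_smul [Fintype V] [Finite κ]
    {C : ι → Finset V} {P : κ → Finset V} (hC : ∀ u, (C u).Nonempty)
    (hPdisj : Pairwise (Function.onFun Disjoint P)) (hPcover : ∀ v, ∃ w, v ∈ P w) :
    IsFair C P ↔ ∀ u, ∃ c : ℝ, (fun w ↦ (#(C u ∩ P w) : ℝ)) = c • fun w ↦ (#(P w) : ℝ) := by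
  cases nonempty_fintype κ
  have sum_card_inter (A : Finset V) : ∑ w, (#(A ∩ P w) : ℝ) = #A :=
    mod_cast sum_card_inter_of_subset_biUnion (hPdisj.set_pairwise _)
      fun v _ ↦ mem_biUnion.mpr ((hPcover v).imp fun w hw ↦ ⟨mem_univ w, hw⟩)
  have sum_card : ∑ w, (#(P w) : ℝ) = Fintype.card V := by
    simpa only [univ_inter, card_univ] using sum_card_inter univ
  refine forall_congr' fun u ↦ ?_
  rw [exists_eq_smul_iff_div_sum_eq_div_sum, sum_card_inter, sum_card]
  rw [sum_card_inter (C u)]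
  exact Nat.cast_ne_zero.mpr (hC u).card_ne_zero

variable [Fintype ι] [Fintype κ]

/-- The number `m^P` of edges of the graph joining any two vertices of a common protected group
`P w`; a loop counts as half an edge. -/
noncomputable def protectedEdgeCount (P : κ → Finset V) : ℝ :=
  (1 / 2) * ∑ w, (#(P w) : ℝ) ^ 2

/-- The fairness-modularity `Q^P` of the communities `C u` with respect to the protected groups
`P w`, for arbitrary finite families of vertex sets. -/
noncomputable def fairnessModularity (C : ι → Finset V) (P : κ → Finset V) : ℝ :=
  (1 / (2 * protectedEdgeCount P)) *
    ((∑ u, ∑ w, (#(C u ∩ P w) : ℝ) ^ 2)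
      - (1 / (2 * protectedEdgeCount P)) *
        ∑ u, (∑ w, (#(C u ∩ P w) : ℝ) * (#(P w) : ℝ)) ^ 2)

theorem fairnessModularity_eq_sum_div (C : ι → Finset V) (P : κ → Finset V) :
    fairnessModularity C P =
      (∑ u, ((∑ w, (#(C u ∩ P w) : ℝ) ^ 2) * ∑ w, (#(P w) : ℝ) ^ 2
        - (∑ w, (#(C u ∩ P w) : ℝ) * #(P w)) ^ 2)) / (∑ w, (#(P w) : ℝ) ^ 2) ^ 2 := by
  have two_mul_edgeCount : 2 * protectedEdgeCount P = ∑ w, (#(P w) : ℝ) ^ 2 := by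
    rw [protectedEdgeCount]
    ring
  rw [fairnessModularity, two_mul_edgeCount, sum_sub_distrib, ← sum_mul]
  rcases eq_or_ne (∑ w, (#(P w) : ℝ) ^ 2) 0 with h | h
  · simp [h]
  · field_simp

theorem fairnessModularity_nonneg (C : ι → Finset V) (P : κ → Finset V) :
    0 ≤ fairnessModularity C P := by
  rw [fairnessModularity_eq_sum_div]
  exact div_nonneg (sum_nonneg fun u _ ↦ sub_nonneg.mpr (sum_mul_sq_le_sq_mul_sq _ _ _))
    (sq_nonneg _)

theorem fairnessModularity_eq_zero_iff_forall_exists_eq_smul (C : ι → Finset V) {P : κ → Finset V}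
    (hP : ∃ w, (P w).Nonempty) :
    fairnessModularity C P = 0 ↔
      ∀ u, ∃ c : ℝ, (fun w ↦ (#(C u ∩ P w) : ℝ)) = c • fun w ↦ (#(P w) : ℝ) := by
  obtain ⟨w, hw⟩ := hP
  have card_ne_zero : (#(P w) : ℝ) ≠ 0 := Nat.cast_ne_zero.mpr hw.card_ne_zero
  have sum_sq_pos : 0 < ∑ w, (#(P w) : ℝ) ^ 2 :=
    sum_pos' (fun _ _ ↦ sq_nonneg _) ⟨w, mem_univ w, sq_pos_of_ne_zero card_ne_zero⟩
  rw [fairnessModularity_eq_sum_div, div_eq_zero_iff, or_iff_left (pow_pos sum_sq_pos 2).ne',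
    sum_eq_zero_iff_of_nonneg fun u _ ↦ sub_nonneg.mpr (sum_mul_sq_le_sq_mul_sq _ _ _)]
  refine forall_congr' fun u ↦ ?_
  rw [← sum_mul_sq_eq_sq_mul_sq_iff (fun h ↦ card_ne_zero (congrFun h w)), sub_eq_zero, eq_comm]
  exact forall_prop_of_true (mem_univ u)

theorem fairness_modularity_nonneg_and_eq_zero_iff_fair_general [Fintype V] [Nonempty V]
    {C : ι → Finset V} {P : κ → Finset V} (hC : ∀ u, (C u).Nonempty)
    (hPdisj : Pairwise (Function.onFun Disjoint P)) (hPcover : ∀ v, ∃ w, v ∈ P w) :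
    0 ≤ fairnessModularity C P ∧ (fairnessModularity C P = 0 ↔ IsFair C P) := by
  have hP : ∃ w, (P w).Nonempty :=
    (hPcover (Classical.arbitrary V)).imp fun _ hw ↦ ⟨_, hw⟩
  exact ⟨fairnessModularity_nonneg C P,
    (fairnessModularity_eq_zero_iff_forall_exists_eq_smul C hP).trans
      (isFair_iff_forall_exists_eq_smul hC hPdisj hPcover).symm⟩

end FairnessModularity

/-- (Theorem 1.) Q^P ≥ 0, with Q^P = 0 iff the partition is fair. -/
theorem fairness_modularity_nonneg_and_eq_zero_iff_fair
    {V : Type*} [Fintype V] [DecidableEq V]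
    (n : ℕ) (hn : Fintype.card V = n) (hn1 : 1 ≤ n)
    (k r : ℕ) (C : Fin k → Finset V) (P : Fin r → Finset V)
    (hCne : ∀ u, (C u).Nonempty)
    (hCdisj : ∀ u u', u ≠ u' → Disjoint (C u) (C u'))
    (hCunion : ∀ v : V, ∃ u, v ∈ C u)
    (hPne : ∀ w, (P w).Nonempty)
    (hPdisj : ∀ w w', w ≠ w' → Disjoint (P w) (P w'))
    (hPunion : ∀ v : V, ∃ w, v ∈ P w)
    (mP : ℝ) (hmP : mP = (1/2) * ∑ w, ((P w).card : ℝ)^2)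
    (QP : ℝ)
    (hQP : QP = (1/(2*mP)) *
      ((∑ u, ∑ w, ((C u ∩ P w).card : ℝ)^2)
        - (1/(2*mP)) * ∑ u, (∑ w, ((C u ∩ P w).card : ℝ) * ((P w).card : ℝ))^2))
    :
    0 ≤ QP ∧
      (QP = 0 ↔ ∀ u w,
        ((C u ∩ P w).card : ℝ) / ((C u).card : ℝ) = ((P w).card : ℝ) / (n : ℝ)) := by
  subst hn hmP hQP
  have : Nonempty V := Fintype.card_pos_iff.mp hn1
  exact fairness_modularity_nonneg_and_eq_zero_iff_fair_general hCne
    (fun w w' ↦ hPdisj w w') hPunion
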